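/- For every X ∈ ES, the axiomatic system XL is sound and complete with respect to the set of X-valid formulas of Φ: for every formula φ ∈ Φ, ⊢_XL φ if and only if ⊨_XL φ. -/

import Mathlib

/-!
One canonical model serves all eight systems. Its states are the Boolean valuations under which
every theorem of XL is true, so that propositional reasoning inside a state is evaluation, and
states with prescribed formulas come from compactness of the space of valuations.

Fix a state `s` and say that `C` forces `φ` when `⟨C⟩φ ∈ s`. Call `ψ` negligible when it can be
dropped from every forced disjunction `χ ∨ ψ`; A-Det says that whatever the grand coalition does not
force is negligible. The successors of `s` are the states containing no negligible formula. If `C`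
forces all finite conjunctions of a set `Φ`, but not `χ`, then some successor contains `Φ` and
not `χ`.

Every agent plays a proposal `(C, φ)`, a bid and a nominated state. A formula `φ` is agreed when
some nonempty `C` forcing `φ` has all its members proposing `(C, φ)`. A profile is available when
every coalition forces the finite conjunctions of the formulas agreed within it, which A-IA makes
automatic since agreeing coalitions with different proposals are disjoint. Outcomes are successors
containing all agreed formulas, and in the deterministic systems the highest bidder selects one.

What the empty coalition forces holds at all successors, and any other coalition forcing `φ`
achieves it by unanimously proposing it. If `D` does not force `χ`, then no joint action of `D`
achieves it: the other agents outbid `D` and nominate a successor refuting `χ`. When there are no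
other agents, determinism leaves only outcomes all of whose formulas are forced by the grand
coalition.
-/

namespace CL

/-- The language Φ of coalition logic over a set of agents, with atomic
propositions drawn from ℕ (a countable set). -/
inductive Formula (Agent : Type) : Type
  | top : Formula Agent
  | atom : ℕ → Formula Agent
  | neg : Formula Agent → Formula Agent
  | and : Formula Agent → Formula Agent → Formula Agent
  | coal : Set Agent → Formula Agent → Formula Agent

namespace Formula

variable {Agent : Type}

def bot : Formula Agent := neg top

def or (φ ψ : Formula Agent) : Formula Agent := neg (and (neg φ) (neg ψ))

def imp (φ ψ : Formula Agent) : Formula Agent := or (neg φ) ψ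

def iff (φ ψ : Formula Agent) : Formula Agent := and (imp φ ψ) (imp ψ φ)

end Formula

/-- The three frame properties: seriality, independence of agents, determinism.
`ES` is represented by `Set P3`, the eight subsets of {S, I, D}. -/
inductive P3 : Type
  | S | I | D
deriving DecidableEq
/-- Propositional evaluation of a formula, treating coalition formulas and
atoms as propositional atoms (valued by `v`). -/
def Formula.evalProp {Agent : Type} (v : Formula Agent → Bool) : Formula Agent → Bool
  | .top => true
  | .atom n => v (.atom n)
  | .neg φ => !(φ.evalProp v)
  | .and φ ψ => φ.evalProp v && ψ.evalProp v
  | .coal C φ => v (.coal C φ)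

/-- A propositional tautology. -/
def Tautology {Agent : Type} (φ : Formula Agent) : Prop :=
  ∀ v : Formula Agent → Bool, φ.evalProp v = true

/-- Derivability in the axiomatic system XL, for X ∈ ES (X : Set P3).
MCL is the case X = ∅ and CL is the case X = {S, I, D}. -/
inductive Deriv {Agent : Type} (X : Set P3) : Formula Agent → Prop
  | taut {φ : Formula Agent} : Tautology φ → Deriv X φ
  | naaa (C : Set Agent) : Deriv X (Formula.neg (Formula.coal C Formula.bot))
  | mg (C : Set Agent) (φ ψ : Formula Agent) :
      Deriv X ((Formula.coal ∅ (φ.imp ψ)).imp ((Formula.coal C φ).imp (Formula.coal C ψ)))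
  | mc {C D : Set Agent} (h : C ⊆ D) (φ : Formula Agent) :
      Deriv X ((Formula.coal C φ).imp (Formula.coal D φ))
  | ser (h : P3.S ∈ X) (C : Set Agent) : Deriv X (Formula.coal C Formula.top)
  | ia (h : P3.I ∈ X) {C D : Set Agent} (hCD : C ∩ D = ∅) (φ ψ : Formula Agent) :
      Deriv X (((Formula.coal C φ).and (Formula.coal D ψ)).imp
        (Formula.coal (C ∪ D) (φ.and ψ)))
  | det (h : P3.D ∈ X) (C : Set Agent) (φ ψ : Formula Agent) :
      Deriv X ((Formula.coal C (φ.or ψ)).imp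
        ((Formula.coal C φ).or (Formula.coal Set.univ ψ)))
  | mp {φ ψ : Formula Agent} : Deriv X (φ.imp ψ) → Deriv X φ → Deriv X ψ
  | cn {φ : Formula Agent} (C : Set Agent) (ψ : Formula Agent) :
      Deriv X φ → Deriv X ((Formula.coal C ψ).imp (Formula.coal ∅ φ))
section
open Classical

/-- Merge of two joint actions of disjoint coalitions. -/
noncomputable def jaUnion {Agent Act : Type} {C D : Set Agent}
    (σC : C → Act) (σD : D → Act) : ↥(C ∪ D) → Act :=
  fun a =>
    if h : a.1 ∈ C then σC ⟨a.1, h⟩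
    else σD ⟨a.1, ((Set.mem_union _ _ _).mp a.2).resolve_left h⟩

end

/-- A general concurrent game frame: a nonempty set of states, a nonempty set
of actions, and an outcome function for the grand coalition.  Joint actions of
a coalition C are functions C → Act; action profiles are functions Agent → Act. -/
structure Frame (Agent : Type) where
  State : Type
  state_nonempty : Nonempty State
  Act : Type
  act_nonempty : Nonempty Act
  out : State → (Agent → Act) → Set State

namespace Frame

variable {Agent : Type} (F : Frame Agent)

/-- Outcome function for a coalition C. -/
def outC (C : Set Agent) (s : F.State) (σ : C → F.Act) : Set F.State :=
  ⋃ (τ : Agent → F.Act) (_ : ∀ a : C, τ a.1 = σ a), F.out s τ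

/-- Availability function: the available joint actions of C at s. -/
def aja (C : Set Agent) (s : F.State) : Set (C → F.Act) :=
  {σ | (F.outC C s σ).Nonempty}

def Serial : Prop := ∀ (s : F.State) (C : Set Agent), (F.aja C s).Nonempty

def Independent : Prop :=
  ∀ (s : F.State) (C D : Set Agent), C ∩ D = ∅ →
    ∀ σC ∈ F.aja C s, ∀ σD ∈ F.aja D s, jaUnion σC σD ∈ F.aja (C ∪ D) s

def Deterministic : Prop :=
  ∀ s : F.State, ∀ σ ∈ F.aja Set.univ s, ∃ t : F.State, F.outC Set.univ s σ = {t}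

end Frame

/-- A general concurrent game model: a frame together with a labeling function
(atomic propositions are drawn from the countable set ℕ). -/
structure Model (Agent : Type) extends Frame Agent where
  lab : State → Set ℕ

namespace Model

variable {Agent : Type} (M : Model Agent)

/-- Satisfaction: M, s ⊨ φ. -/
def sat : Formula Agent → M.State → Prop
  | .top, _ => True
  | .atom n, s => n ∈ M.lab s
  | .neg φ, s => ¬ sat φ s
  | .and φ ψ, s => sat φ s ∧ sat ψ s
  | .coal C φ, s => ∃ σ ∈ M.toFrame.aja C s, ∀ t ∈ M.toFrame.outC C s σ, sat φ t

/-- M is an X-model (for X ∈ ES). -/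
def IsX (X : Set P3) : Prop :=
  (P3.S ∈ X → M.toFrame.Serial) ∧ (P3.I ∈ X → M.toFrame.Independent) ∧
    (P3.D ∈ X → M.toFrame.Deterministic)

end Model

/-- φ is X-valid: φ holds at every pointed X-model. -/
def XValid {Agent : Type} (X : Set P3) (φ : Formula Agent) : Prop :=
  ∀ M : Model Agent, M.IsX X → ∀ s : M.State, M.sat φ s

/-- φ is X-satisfiable: φ holds at some pointed X-model. -/
def XSat {Agent : Type} (X : Set P3) (φ : Formula Agent) : Prop :=
  ∃ M : Model Agent, M.IsX X ∧ ∃ s : M.State, M.sat φ s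

/-- φ ⊨_XL ψ : ψ holds at every pointed X-model at which φ holds. -/
def XConseq {Agent : Type} (X : Set P3) (φ ψ : Formula Agent) : Prop :=
  ∀ M : Model Agent, M.IsX X → ∀ s : M.State, M.sat φ s → M.sat ψ s

/-! ### Valuations -/

namespace Formula

variable {Agent : Type} {φ ψ : Formula Agent} {v : Formula Agent → Bool}

/-- The valuations making `φ` true, as a clopen subset of the Cantor-like space
`Formula Agent → Bool`. -/
def models (φ : Formula Agent) : Set (Formula Agent → Bool) := {v | φ.evalProp v = true}

@[grind =]
theorem mem_models_top : v ∈ (top : Formula Agent).models ↔ True := by simp [models, evalProp]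

@[grind =]
theorem mem_models_neg : v ∈ φ.neg.models ↔ v ∉ φ.models := by simp [models, evalProp]

@[grind =]
theorem mem_models_and : v ∈ (φ.and ψ).models ↔ v ∈ φ.models ∧ v ∈ ψ.models := by
  simp [models, evalProp]

@[grind =]
theorem mem_models_bot : v ∈ (bot : Formula Agent).models ↔ False := by
  simp [bot, mem_models_neg, mem_models_top]

@[grind =]
theorem mem_models_or : v ∈ (φ.or ψ).models ↔ v ∈ φ.models ∨ v ∈ ψ.models := by
  grind [Formula.or]

@[grind =]
theorem mem_models_imp : v ∈ (φ.imp ψ).models ↔ (v ∈ φ.models → v ∈ ψ.models) := by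
  grind [imp]

theorem isClopen_models (φ : Formula Agent) : IsClopen φ.models := by
  induction φ with
  | top => simp [models, evalProp, isClopen_univ]
  | atom n => exact (isClopen_discrete {true}).preimage (continuous_apply (atom n))
  | neg φ ih =>
    have models_neg : φ.neg.models = φ.modelsᶜ := Set.ext fun _ => mem_models_neg
    exact models_neg ▸ ih.compl
  | and φ ψ ihφ ihψ =>
    have models_and : (φ.and ψ).models = φ.models ∩ ψ.models := Set.ext fun _ => mem_models_and
    exact models_and ▸ ihφ.inter ihψ
  | coal C φ _ => exact (isClopen_discrete {true}).preimage (continuous_apply (coal C φ))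

/-- The conjunction of a finite set of formulas, in an arbitrary order. -/
noncomputable def conj (Ψ : Finset (Formula Agent)) : Formula Agent :=
  Ψ.toList.foldr Formula.and top

@[grind =]
theorem mem_models_conj {Ψ : Finset (Formula Agent)} :
    v ∈ (conj Ψ).models ↔ ∀ φ ∈ Ψ, v ∈ φ.models := by
  have mem_foldr (l : List (Formula Agent)) :
      v ∈ (l.foldr Formula.and top).models ↔ ∀ φ ∈ l, v ∈ φ.models := by
    induction l with
    | nil => simp [mem_models_top]
    | cons φ l ih => simp [mem_models_and, ih]
  simp [conj, mem_foldr]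

end Formula

theorem Deriv.of_forall_mem_models {Agent : Type} {X : Set P3} {φ : Formula Agent}
    (h : ∀ v, v ∈ φ.models) : Deriv X φ :=
  .taut h

theorem Deriv.imp_of_models_subset {Agent : Type} {X : Set P3} {φ ψ : Formula Agent}
    (h : φ.models ⊆ ψ.models) : Deriv X (φ.imp ψ) :=
  .of_forall_mem_models fun _ => Formula.mem_models_imp.2 (@h _)

theorem Deriv.of_models_inter_subset {Agent : Type} {X : Set P3} {φ ψ χ : Formula Agent}
    (hφ : Deriv X φ) (hψ : Deriv X ψ) (h : φ.models ∩ ψ.models ⊆ χ.models) : Deriv X χ :=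
  (imp_of_models_subset (φ := φ) (ψ := ψ.imp χ) (by grind)).mp hφ |>.mp hψ

theorem Deriv.of_models_subset {Agent : Type} {X : Set P3} {φ ψ : Formula Agent}
    (hφ : Deriv X φ) (h : φ.models ⊆ ψ.models) : Deriv X ψ :=
  (imp_of_models_subset h).mp hφ

/-! ### Frames in terms of action profiles -/

namespace Frame

variable {Agent : Type} {F : Frame Agent} {C : Set Agent} {s t : F.State} {σ : C → F.Act}

theorem mem_outC : t ∈ F.outC C s σ ↔ ∃ τ, C.domRestrict τ = σ ∧ t ∈ F.out s τ := by
  simp [outC, funext_iff]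

theorem mem_aja : σ ∈ F.aja C s ↔ ∃ τ, C.domRestrict τ = σ ∧ (F.out s τ).Nonempty := by
  simp only [aja, Set.Nonempty, Set.mem_ofPred_eq, mem_outC]
  grind

theorem serial_iff : F.Serial ↔ ∀ s, ∃ τ, (F.out s τ).Nonempty := by
  simp [Serial, Set.Nonempty, mem_aja]

open Classical in
theorem jaUnion_domRestrict {Act : Type} {C D : Set Agent} (τ τ' : Agent → Act) :
    jaUnion (C.domRestrict τ) (D.domRestrict τ') = (C ∪ D).domRestrict (C.piecewise τ τ') :=
  rfl

open Classical in
theorem independent_iff : F.Independent ↔ ∀ s τ τ', (F.out s τ).Nonempty → (F.out s τ').Nonempty →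
    ∀ C : Set Agent, (F.out s (C.piecewise τ τ')).Nonempty := by
  constructor
  · intro hF s τ τ' hτ hτ' C
    obtain ⟨ρ, hρ, hne⟩ := mem_aja.1 <| hF s C Cᶜ C.inter_compl_self _ (mem_aja.2 ⟨τ, rfl, hτ⟩) _
      (mem_aja.2 ⟨τ', rfl, hτ'⟩)
    rw [jaUnion_domRestrict, Set.domRestrict_eq_domRestrict_iff, Set.union_compl_self,
      Set.eqOn_univ] at hρ
    rwa [← hρ]
  · rintro hF s C D - _ hσ _ hσ'
    obtain ⟨τ, rfl, hτ⟩ := mem_aja.1 hσ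
    obtain ⟨τ', rfl, hτ'⟩ := mem_aja.1 hσ'
    exact mem_aja.2 ⟨_, (jaUnion_domRestrict τ τ').symm, hF s τ τ' hτ hτ' C⟩

theorem outC_univ (τ : Agent → F.Act) :
    F.outC Set.univ s (Set.univ.domRestrict τ) = F.out s τ := by
  ext t
  simp [mem_outC]

theorem deterministic_iff : F.Deterministic ↔ ∀ s τ, (F.out s τ).Subsingleton := by
  constructor
  · intro hF s τ t ht u hu
    obtain ⟨w, hw⟩ := hF s (Set.univ.domRestrict τ) (mem_aja.2 ⟨τ, rfl, t, ht⟩)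
    rw [outC_univ] at hw
    grind
  · intro hF s σ hσ
    obtain ⟨τ, rfl, t, ht⟩ := mem_aja.1 hσ
    exact ⟨t, by rw [outC_univ, (hF s τ).eq_singleton_of_mem ht]⟩

end Frame

/-! ### Soundness -/

namespace Model

variable {Agent : Type} {M : Model Agent} {C D : Set Agent} {φ ψ : Formula Agent} {s : M.State}

theorem sat_coal : M.sat (.coal C φ) s ↔ ∃ τ, (M.out s τ).Nonempty ∧
    ∀ τ', Set.EqOn τ' τ C → ∀ t ∈ M.out s τ', M.sat φ t := by
  simp only [sat, Frame.mem_aja, Frame.mem_outC]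
  constructor
  · rintro ⟨_, ⟨τ, rfl, hne⟩, h⟩
    exact ⟨τ, hne, fun τ' hτ' t ht => h t ⟨τ', Set.domRestrict_eq_domRestrict_iff.2 hτ', ht⟩⟩
  · rintro ⟨τ, hne, h⟩
    refine ⟨_, ⟨τ, rfl, hne⟩, ?_⟩
    rintro t ⟨τ', hτ', ht⟩
    exact h τ' (Set.domRestrict_eq_domRestrict_iff.1 hτ') t ht

theorem sat_or : M.sat (φ.or ψ) s ↔ M.sat φ s ∨ M.sat ψ s := by
  simp only [Formula.or, sat]
  tauto

theorem sat_imp : M.sat (φ.imp ψ) s ↔ (M.sat φ s → M.sat ψ s) := by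
  simp only [Formula.imp, sat_or, sat]
  tauto

open Classical in
theorem sat_iff_mem_models : M.sat φ s ↔ (fun ψ => decide (M.sat ψ s)) ∈ φ.models := by
  induction φ with
  | top => simp [sat, Formula.mem_models_top]
  | atom n => simp [Formula.models, Formula.evalProp]
  | neg φ ih => simp only [sat, ih, Formula.mem_models_neg]
  | and φ ψ ihφ ihψ => simp only [sat, ihφ, ihψ, Formula.mem_models_and]
  | coal C φ _ => simp [Formula.models, Formula.evalProp]

theorem sat_coal_union_and (hM : M.toFrame.Independent) (hCD : Disjoint C D)
    (hφ : M.sat (.coal C φ) s) (hψ : M.sat (.coal D ψ) s) :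
    M.sat (.coal (C ∪ D) (φ.and ψ)) s := by
  classical
  obtain ⟨τ, hτ, hτφ⟩ := sat_coal.1 hφ
  obtain ⟨τ', hτ', hτψ⟩ := sat_coal.1 hψ
  refine sat_coal.2 ⟨C.piecewise τ τ', Frame.independent_iff.1 hM s τ τ' hτ hτ' C, ?_⟩
  intro ρ hρ t ht
  have hρC : Set.EqOn ρ τ C :=
    (hρ.mono Set.subset_union_left).trans (Set.piecewise_eqOn C τ τ')
  have hρD : Set.EqOn ρ τ' D :=
    (hρ.mono Set.subset_union_right).trans
      ((Set.piecewise_eqOn_compl C τ τ').mono hCD.subset_compl_left)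
  exact ⟨hτφ ρ hρC t ht, hτψ ρ hρD t ht⟩

theorem sat_coal_or_sat_coal_univ (hM : M.toFrame.Deterministic)
    (h : M.sat (.coal C (φ.or ψ)) s) : M.sat (.coal C φ) s ∨ M.sat (.coal Set.univ ψ) s := by
  obtain ⟨τ, hne, hτ⟩ := sat_coal.1 h
  by_cases hφ : ∀ τ', Set.EqOn τ' τ C → ∀ t ∈ M.out s τ', M.sat φ t
  · exact .inl (sat_coal.2 ⟨τ, hne, hφ⟩)
  push Not at hφ
  obtain ⟨τ', hτ', t, ht, htφ⟩ := hφ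
  have htψ : M.sat ψ t := (sat_or.1 (hτ τ' hτ' t ht)).resolve_left htφ
  refine .inr (sat_coal.2 ⟨τ', ⟨t, ht⟩, fun ρ hρ u hu => ?_⟩)
  rw [Set.eqOn_univ] at hρ
  subst hρ
  rwa [Frame.deterministic_iff.1 hM s ρ hu ht]

end Model

theorem Deriv.xValid {Agent : Type} {X : Set P3} {φ : Formula Agent} (h : Deriv X φ) :
    XValid X φ := by
  rintro M ⟨hS, hI, hD⟩
  induction h with
  | taut h => exact fun s => Model.sat_iff_mem_models.2 (h _)
  | naaa C =>
    rintro s ⟨σ, ⟨t, ht⟩, h⟩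
    exact h t ht trivial
  | mg C φ ψ =>
    intro s
    simp only [Model.sat_imp, Model.sat_coal]
    rintro ⟨τ₀, -, himp⟩ ⟨τ, hne, hφ⟩
    exact ⟨τ, hne, fun τ' hτ' t ht => himp τ' (Set.eqOn_empty _ _) t ht (hφ τ' hτ' t ht)⟩
  | mc hCD φ =>
    intro s
    simp only [Model.sat_imp, Model.sat_coal]
    rintro ⟨τ, hne, hφ⟩
    exact ⟨τ, hne, fun τ' hτ' => hφ τ' (hτ'.mono hCD)⟩
  | ser hX C =>
    intro s
    obtain ⟨σ, hσ⟩ := hS hX s C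
    exact ⟨σ, hσ, fun _ _ => trivial⟩
  | ia hX hCD φ ψ =>
    exact fun s => Model.sat_imp.2 fun ⟨hφ, hψ⟩ =>
      Model.sat_coal_union_and (hI hX) (Set.disjoint_iff_inter_eq_empty.2 hCD) hφ hψ
  | det hX C φ ψ =>
    exact fun s => Model.sat_imp.2 fun h =>
      Model.sat_or.2 (Model.sat_coal_or_sat_coal_univ (hD hX) h)
  | mp _ _ ihimp ihφ => exact fun s => Model.sat_imp.1 (ihimp s) (ihφ s)
  | cn C ψ _ ih =>
    intro s
    simp only [Model.sat_imp, Model.sat_coal]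
    rintro ⟨τ, hne, -⟩
    exact ⟨τ, hne, fun _ _ t _ => ih t⟩

/-! ### Canonical states -/

/-- A state of the canonical model: a Boolean valuation under which every theorem of XL is true. The
formulas it makes true form a maximal consistent set, and every maximal consistent set arises; the
values of the valuation at compound propositional formulas are irrelevant. -/
structure World (Agent : Type) (X : Set P3) where
  val : Formula Agent → Bool
  val_mem_models : ∀ φ, Deriv X φ → val ∈ φ.models

/-- `φ ∈ s` says that `φ` is true under the valuation `s`. -/
instance {Agent : Type} {X : Set P3} : Membership (Formula Agent) (World Agent X) :=
  ⟨fun s φ => s.val ∈ φ.models⟩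

/-- A theory: a set of formulas containing the theorems of XL and closed under modus ponens. -/
structure IsTheory {Agent : Type} (X : Set P3) (T : Set (Formula Agent)) : Prop where
  deriv : ∀ φ, Deriv X φ → φ ∈ T
  mp : ∀ φ ψ, φ.imp ψ ∈ T → φ ∈ T → ψ ∈ T

section Theories

variable {Agent : Type} {X : Set P3} {T : Set (Formula Agent)} {φ ψ : Formula Agent}

theorem IsTheory.mem_of_models_subset (hT : IsTheory X T) (hφ : φ ∈ T)
    (h : φ.models ⊆ ψ.models) : ψ ∈ T :=
  hT.mp φ ψ (hT.deriv _ (.imp_of_models_subset h)) hφ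

theorem IsTheory.and_mem (hT : IsTheory X T) (hφ : φ ∈ T) (hψ : ψ ∈ T) : φ.and ψ ∈ T :=
  hT.mp ψ _ (hT.mem_of_models_subset hφ (by grind)) hψ

theorem IsTheory.exists_world (hT : IsTheory X T) (hbot : .bot ∉ T) :
    ∃ s : World Agent X, ∀ φ ∈ T, φ ∈ s := by
  have : Nonempty T := ⟨.top, hT.deriv _ (.of_forall_mem_models (by grind))⟩
  obtain ⟨v, hv⟩ : (⋂ φ : T, φ.1.models).Nonempty := by
    refine IsCompact.nonempty_iInter_of_directed_nonempty_isCompact_isClosed _ ?_ ?_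
      (fun φ => φ.1.isClopen_models.isClosed.isCompact) fun φ => φ.1.isClopen_models.isClosed
    · rintro ⟨φ, hφ⟩ ⟨ψ, hψ⟩
      exact ⟨⟨φ.and ψ, hT.and_mem hφ hψ⟩, by grind, by grind⟩
    · rintro ⟨φ, hφ⟩
      by_contra hempty
      rw [Set.not_nonempty_iff_eq_empty] at hempty
      exact hbot (hT.mem_of_models_subset hφ (by simp [hempty]))
  rw [Set.mem_iInter] at hv
  exact ⟨⟨v, fun φ hφ => hv ⟨φ, hT.deriv φ hφ⟩⟩, fun φ hφ => hv ⟨φ, hφ⟩⟩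

theorem exists_world_notMem (h : ¬ Deriv X φ) : ∃ s : World Agent X, φ ∉ s := by
  have hT : IsTheory X {ψ | Deriv X (φ.or ψ)} :=
    { deriv ψ hψ := hψ.of_models_subset (by grind)
      mp ψ χ hψχ hψ := hψχ.of_models_inter_subset hψ (by grind) }
  obtain ⟨s, hs⟩ := hT.exists_world fun hbot => h (hbot.of_models_subset (by grind))
  exact ⟨s, Formula.mem_models_neg.1 (hs φ.neg (.of_forall_mem_models (by grind)))⟩

end Theories

namespace World

variable {Agent : Type} {X : Set P3} {s : World Agent X} {C D : Set Agent} {φ ψ χ : Formula Agent}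
  {Φ Φ' : Set (Formula Agent)}

theorem mem_of_deriv_imp (h : Deriv X (φ.imp ψ)) (hφ : φ ∈ s) : ψ ∈ s :=
  Formula.mem_models_imp.1 (s.val_mem_models _ h) hφ

/-- `s.Forces C φ` says that `⟨C⟩φ` belongs to `s`. -/
def Forces (s : World Agent X) (C : Set Agent) (φ : Formula Agent) : Prop := .coal C φ ∈ s

theorem not_forces_bot (C : Set Agent) : ¬ s.Forces C .bot :=
  Formula.mem_models_neg.1 (s.val_mem_models _ (.naaa C))

namespace Forces

theorem mono (hCD : C ⊆ D) (h : s.Forces C φ) : s.Forces D φ :=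
  mem_of_deriv_imp (.mc hCD φ) h

theorem of_forces_empty_imp (h : s.Forces C φ) (himp : s.Forces ∅ (φ.imp ψ)) : s.Forces C ψ :=
  Formula.mem_models_imp.1 (mem_of_deriv_imp (.mg C φ ψ) himp) h

theorem of_deriv (h : s.Forces C φ) (hψ : Deriv X ψ) : s.Forces D ψ :=
  mono (Set.empty_subset D) (mem_of_deriv_imp (.cn C φ hψ) h)

theorem of_deriv_imp (h : s.Forces C φ) (himp : Deriv X (φ.imp ψ)) : s.Forces C ψ :=
  h.of_forces_empty_imp (h.of_deriv himp)

theorem of_models_subset (h : s.Forces C φ) (hφψ : φ.models ⊆ ψ.models) : s.Forces C ψ :=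
  h.of_deriv_imp (.imp_of_models_subset hφψ)

theorem union_and (hI : P3.I ∈ X) (hCD : Disjoint C D) (hφ : s.Forces C φ) (hψ : s.Forces D ψ) :
    s.Forces (C ∪ D) (φ.and ψ) :=
  mem_of_deriv_imp (.ia hI hCD.inter_eq φ ψ) (Formula.mem_models_and.2 ⟨hφ, hψ⟩)

theorem or_univ (hD : P3.D ∈ X) (h : s.Forces C (φ.or ψ)) :
    s.Forces C φ ∨ s.Forces Set.univ ψ :=
  Formula.mem_models_or.1 (mem_of_deriv_imp (.det hD C φ ψ) h)

end Forces

/-- `C` forces every finite part of `Φ` at once. -/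
def ForcesAll (s : World Agent X) (C : Set Agent) (Φ : Set (Formula Agent)) : Prop :=
  ∀ Ψ : Finset (Formula Agent), ↑Ψ ⊆ Φ → s.Forces C (.conj Ψ)

theorem ForcesAll.mono (hCD : C ⊆ D) (hΦ : Φ' ⊆ Φ) (h : s.ForcesAll C Φ) : s.ForcesAll D Φ' :=
  fun Ψ hΨ => (h Ψ (hΨ.trans hΦ)).mono hCD

theorem Forces.forcesAll_of_subset_singleton (h : s.Forces C φ) (hΦ : Φ ⊆ {φ}) :
    s.ForcesAll C Φ := by
  intro Ψ hΨ
  refine h.of_models_subset fun v hv => Formula.mem_models_conj.2 fun ψ hψ => ?_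
  rwa [show ψ = φ from hΦ (hΨ hψ)]

/-- The formulas that can be dropped from every forced disjunction. -/
def negligible (s : World Agent X) : Set (Formula Agent) :=
  {ψ | ∀ C χ, s.Forces C (χ.or ψ) → s.Forces C χ}

theorem bot_mem_negligible : .bot ∈ s.negligible :=
  fun _ _ h => h.of_models_subset (by grind)

theorem or_mem_negligible (hφ : φ ∈ s.negligible) (hψ : ψ ∈ s.negligible) :
    φ.or ψ ∈ s.negligible :=
  fun C χ h => hφ C χ (hψ C (χ.or φ) (h.of_models_subset (by grind)))

theorem Forces.neg_mem_negligible (h : s.Forces ∅ φ) : φ.neg ∈ s.negligible :=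
  fun _ _ hχ => hχ.of_forces_empty_imp (h.of_models_subset (by grind))

theorem mem_negligible_of_not_forces_univ (hD : P3.D ∈ X) (h : ¬ s.Forces Set.univ ψ) :
    ψ ∈ s.negligible :=
  fun _ _ hχ => (hχ.or_univ hD).resolve_right h

/-- The worlds that the canonical model allows as outcomes at `s`. -/
def succ (s : World Agent X) : Set (World Agent X) := {t | ∀ ψ ∈ s.negligible, ψ ∉ t}

theorem Forces.mem_of_mem_succ {t : World Agent X} (h : s.Forces ∅ φ) (ht : t ∈ s.succ) :
    φ ∈ t :=
  not_not.1 fun hφ => ht _ h.neg_mem_negligible (Formula.mem_models_neg.2 hφ)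

open Classical in
/-- A world making this theory true contains `Φ`, but neither `χ` nor any negligible formula. -/
theorem isTheory_relative_to_negligible (s : World Agent X) (Φ : Set (Formula Agent))
    (χ : Formula Agent) :
    IsTheory X {ψ | ∃ Ψ : Finset (Formula Agent), ↑Ψ ⊆ Φ ∧ ∃ ξ ∈ s.negligible,
      Deriv X ((Formula.conj Ψ).imp ((χ.or ψ).or ξ))} where
  deriv ψ hψ := ⟨∅, by simp, .bot, bot_mem_negligible, hψ.of_models_subset (by grind)⟩
  mp := by
    rintro φ ψ ⟨Ψ₁, hΨ₁, ξ₁, hξ₁, h₁⟩ ⟨Ψ₂, hΨ₂, ξ₂, hξ₂, h₂⟩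
    exact ⟨Ψ₁ ∪ Ψ₂, by simp [hΨ₁, hΨ₂], ξ₁.or ξ₂, or_mem_negligible hξ₁ hξ₂,
      h₁.of_models_inter_subset h₂ (by grind)⟩

theorem ForcesAll.exists_mem_succ (hΦ : s.ForcesAll C Φ) (hχ : ¬ s.Forces C χ) :
    ∃ t ∈ s.succ, (∀ φ ∈ Φ, φ ∈ t) ∧ χ ∉ t := by
  obtain ⟨t, ht⟩ := (isTheory_relative_to_negligible s Φ χ).exists_world <| by
    rintro ⟨Ψ, hΨ, ξ, hξ, h⟩
    have hforces : s.Forces C ((χ.or .bot).or ξ) := (hΦ Ψ hΨ).of_deriv_imp h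
    exact hχ (bot_mem_negligible C χ (hξ C _ hforces))
  refine ⟨t, fun ξ hξ => Formula.mem_models_neg.1 (ht ξ.neg ?_), fun φ hφ => ht φ ?_,
    Formula.mem_models_neg.1 (ht χ.neg ?_)⟩
  · exact ⟨∅, by simp, ξ, hξ, .imp_of_models_subset (by grind)⟩
  · exact ⟨{φ}, by simpa, .bot, bot_mem_negligible, .imp_of_models_subset (by grind)⟩
  · exact ⟨∅, by simp, .bot, bot_mem_negligible, .imp_of_models_subset (by grind)⟩

end World

/-! ### The canonical model -/

/-- Bids for the choice of the outcome: well-founded trees branching over the agents, so that any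
family of bids indexed by the agents can be outbid, however many agents there are. -/
inductive Bid (Agent : Type) : Type
  | pass : Bid Agent
  | above : (Agent → Bid Agent) → Bid Agent

/-- `x.Lt y` says that `x` is one of the bids that `y` is above, which is not transitive. -/
def Bid.Lt {Agent : Type} (x : Bid Agent) : Bid Agent → Prop
  | .pass => False
  | .above f => ∃ a, f a = x

theorem Bid.Lt.asymm {Agent : Type} {x y : Bid Agent} (h : x.Lt y) : ¬ y.Lt x := by
  induction x generalizing y with
  | pass => exact id
  | above f ih =>
    rintro ⟨a, rfl⟩
    exact ih a (y := .above f) ⟨a, rfl⟩ h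

/-- An action of the canonical model: a proposal `(C, φ)`, calling on the coalition `C` to force
`φ`, and a world that is nominated as the outcome with a certain bid. A proposal with `C` empty is
void. -/
structure CanAct (Agent : Type) (X : Set P3) where
  proposal : Set Agent × Formula Agent
  bid : Bid Agent
  pick : World Agent X

section Canonical

variable {Agent : Type} {X : Set P3} {s t : World Agent X} {τ τ' : Agent → CanAct Agent X}
  {B D : Set Agent} {φ χ : Formula Agent}

/-- The formulas on which some nonempty coalition within `D` that is able to force them agrees. -/
def agreed (s : World Agent X) (τ : Agent → CanAct Agent X) (D : Set Agent) :
    Set (Formula Agent) :=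
  {φ | ∃ C ⊆ D, C.Nonempty ∧ s.Forces C φ ∧ ∀ a ∈ C, (τ a).proposal = (C, φ)}

/-- The profiles with an outcome in the canonical model. -/
def Avail (s : World Agent X) (τ : Agent → CanAct Agent X) : Prop :=
  ∀ D, s.ForcesAll D (agreed s τ D)

/-- The worlds compatible with what is agreed under the profile `τ`. -/
def poss (s : World Agent X) (τ : Agent → CanAct Agent X) : Set (World Agent X) :=
  {t ∈ s.succ | ∀ φ ∈ agreed s τ Set.univ, φ ∈ t}

/-- `t` wins the auction: some agent nominating `t` outbids all those who nominate other worlds. -/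
def Wins (τ : Agent → CanAct Agent X) (t : World Agent X) : Prop :=
  ∃ a, (τ a).pick = t ∧ ∀ b, (τ b).pick ≠ t → (τ b).bid.Lt (τ a).bid

theorem Wins.unique {u : World Agent X} (ht : Wins τ t) (hu : Wins τ u) : t = u := by
  obtain ⟨a, rfl, ha⟩ := ht
  obtain ⟨b, rfl, hb⟩ := hu
  by_contra hne
  exact (ha b (Ne.symm hne)).asymm (hb a hne)

/-- The outcome of `τ` in the deterministic systems: the winner of the auction if it is possible,
and an arbitrary possible world otherwise. -/
noncomputable def result (s : World Agent X) (τ : Agent → CanAct Agent X) : World Agent X :=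
  @Classical.epsilon _ ⟨s⟩ fun t => t ∈ poss s τ ∧ ∀ u ∈ poss s τ, Wins τ u → u = t

theorem result_spec (h : (poss s τ).Nonempty) :
    result s τ ∈ poss s τ ∧ ∀ u ∈ poss s τ, Wins τ u → u = result s τ := by
  apply Classical.epsilon_spec (p := fun t => t ∈ poss s τ ∧ ∀ u ∈ poss s τ, Wins τ u → u = t)
  by_cases hwin : ∃ t ∈ poss s τ, Wins τ t
  · obtain ⟨t, ht, hwt⟩ := hwin
    exact ⟨t, ht, fun u _ hwu => hwu.unique hwt⟩
  · obtain ⟨t, ht⟩ := h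
    exact ⟨t, ht, fun u hu hwu => (hwin ⟨u, hu, hwu⟩).elim⟩

/-- The outcome function of the canonical model. -/
def canOut (s : World Agent X) (τ : Agent → CanAct Agent X) : Set (World Agent X) :=
  {t ∈ poss s τ | Avail s τ ∧ (P3.D ∈ X → t = result s τ)}

theorem Avail.canOut_nonempty (h : Avail s τ) : (canOut s τ).Nonempty := by
  obtain ⟨t, ht, hagreed, -⟩ := (h Set.univ).exists_mem_succ (World.not_forces_bot _)
  exact ⟨result s τ, (result_spec ⟨t, ht, hagreed⟩).1, h, fun _ => rfl⟩

theorem canOut_nonempty_iff : (canOut s τ).Nonempty ↔ Avail s τ :=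
  ⟨fun ⟨_, _, h, _⟩ => h, Avail.canOut_nonempty⟩

theorem Avail.forces_top (h : Avail s τ) : s.Forces ∅ .top :=
  (h ∅ ∅ (by simp)).of_models_subset (by grind)

theorem avail_of_independent (hI : P3.I ∈ X) (hs : s.Forces ∅ .top)
    (τ : Agent → CanAct Agent X) : Avail s τ := by
  classical
  intro D Ψ hΨ
  induction Ψ using Finset.induction_on generalizing D with
  | empty => exact hs.of_deriv (.of_forall_mem_models (by grind))
  | insert φ Ψ hφΨ ih =>
    rw [Finset.coe_insert, Set.insert_subset_iff] at hΨ
    obtain ⟨⟨C, hCD, -, hforces, hC⟩, hΨD⟩ := hΨ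
    have hΨdiff : ↑Ψ ⊆ agreed s τ (D \ C) := by
      intro ψ hψ
      obtain ⟨C', hC'D, hne, hforces', hC'⟩ := hΨD hψ
      have hdisj : Disjoint C' C := by
        refine Set.disjoint_left.2 fun a haC' haC => hφΨ ?_
        obtain ⟨-, rfl⟩ := Prod.mk.inj ((hC a haC).symm.trans (hC' a haC'))
        exact hψ
      exact ⟨C', Set.subset_sdiff.2 ⟨hC'D, hdisj⟩, hne, hforces', hC'⟩
    have hand := hforces.union_and hI Set.disjoint_sdiff_right (ih _ hΨdiff)
    rw [Set.union_sdiff_cancel hCD] at hand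
    exact hand.of_models_subset (by grind)

theorem avail_const (h : s.Forces D φ) (b : Bid Agent) (t : World Agent X) :
    Avail s fun _ => ⟨(D, φ), b, t⟩ := by
  intro B
  have hagreed : ∀ ψ ∈ agreed s (fun _ => ⟨(D, φ), b, t⟩) B, D ⊆ B ∧ ψ = φ := by
    rintro ψ ⟨C, hCB, ⟨a, ha⟩, -, hC⟩
    obtain ⟨rfl, rfl⟩ := Prod.ext_iff.1 (hC a ha)
    exact ⟨hCB, rfl⟩
  by_cases hDB : D ⊆ B
  · exact (h.mono hDB).forcesAll_of_subset_singleton fun ψ hψ => (hagreed ψ hψ).2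
  · exact (h.of_deriv (ψ := .top) (.of_forall_mem_models (by grind))).forcesAll_of_subset_singleton
      fun ψ hψ => (hDB (hagreed ψ hψ).1).elim

/-- The canonical model of XL; `w` only witnesses that there are states. -/
def canModel (w : World Agent X) : Model Agent where
  State := World Agent X
  state_nonempty := ⟨w⟩
  Act := CanAct Agent X
  act_nonempty := ⟨⟨(∅, .top), .pass, w⟩⟩
  out := canOut
  lab s := {n | .atom n ∈ s}

theorem canModel_isX (w : World Agent X) : (canModel w).IsX X := by
  refine ⟨fun hS => Frame.serial_iff.2 fun s => ?_,
    fun hI => Frame.independent_iff.2 fun s τ τ' hτ _ C => ?_,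
    fun hD => Frame.deterministic_iff.2 fun s τ t ht u hu => ?_⟩
  · have htop : World.Forces s ∅ .top := s.val_mem_models _ (.ser hS ∅)
    exact ⟨_, (avail_const htop .pass s).canOut_nonempty⟩
  · have hs := (canOut_nonempty_iff.1 hτ).forces_top
    exact (avail_of_independent hI hs _).canOut_nonempty
  · exact (ht.2.2 hD).trans (hu.2.2 hD).symm

theorem exists_profile_of_forces (h : s.Forces D φ) :
    ∃ τ, (canOut s τ).Nonempty ∧ ∀ τ', Set.EqOn τ' τ D → ∀ t ∈ canOut s τ', φ ∈ t := by
  refine ⟨_, (avail_const h .pass s).canOut_nonempty, fun τ' hτ' t ht => ?_⟩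
  obtain ⟨hsucc, hagreed⟩ := ht.1
  rcases D.eq_empty_or_nonempty with rfl | hD
  · exact h.mem_of_mem_succ hsucc
  · exact hagreed φ ⟨D, Set.subset_univ D, hD, h, fun a ha => by rw [hτ' ha]⟩

open Classical in
/-- The profile in which the agents outside `D` make no proposal and outbid `τ` in order to nominate
`t`, while `D` plays according to `τ`. -/
noncomputable def override (τ : Agent → CanAct Agent X) (D : Set Agent) (t : World Agent X) :
    Agent → CanAct Agent X :=
  D.piecewise τ fun _ => ⟨(∅, .top), .above fun a => (τ a).bid, t⟩

open Classical in
theorem override_eqOn (τ : Agent → CanAct Agent X) (D : Set Agent) (t : World Agent X) :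
    Set.EqOn (override τ D t) τ D :=
  Set.piecewise_eqOn D τ _

open Classical in
theorem override_of_notMem {a : Agent} (ha : a ∉ D) :
    override τ D t a = ⟨(∅, .top), .above fun a => (τ a).bid, t⟩ :=
  Set.piecewise_eq_of_notMem D τ _ ha

theorem agreed_override_subset : agreed s (override τ D t) B ⊆ agreed s τ (B ∩ D) := by
  rintro φ ⟨C, hCB, hne, hforces, hC⟩
  have hCD : C ⊆ D := by
    intro a ha
    by_contra haD
    have hvoid := hC a ha
    rw [override_of_notMem haD, Prod.mk.injEq] at hvoid
    exact hne.ne_empty hvoid.1.symm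
  exact ⟨C, Set.subset_inter hCB hCD, hne, hforces,
    fun a ha => override_eqOn τ D t (hCD ha) ▸ hC a ha⟩

theorem Avail.override (h : Avail s τ) : Avail s (override τ D t) :=
  fun B => (h (B ∩ D)).mono Set.inter_subset_left agreed_override_subset

theorem wins_override (hD : D ≠ Set.univ) : Wins (override τ D t) t := by
  obtain ⟨a, ha⟩ := (Set.ne_univ_iff_exists_notMem D).1 hD
  refine ⟨a, by rw [override_of_notMem ha], fun b hb => ?_⟩
  have hbD : b ∈ D := by
    by_contra hbD
    exact hb (by rw [override_of_notMem hbD])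
  rw [override_of_notMem ha, override_eqOn τ D t hbD]
  exact ⟨b, rfl⟩

theorem mem_canOut_override (h : Avail s τ) (ht : t ∈ s.succ) (hagreed : ∀ φ ∈ agreed s τ D, φ ∈ t)
    (hD : P3.D ∈ X → D ≠ Set.univ) : t ∈ canOut s (override τ D t) := by
  have hposs : t ∈ poss s (override τ D t) :=
    ⟨ht, fun φ hφ => hagreed φ (Set.univ_inter D ▸ agreed_override_subset hφ)⟩
  exact ⟨hposs, h.override, fun hX => (result_spec ⟨t, hposs⟩).2 t hposs (wins_override (hD hX))⟩

theorem forces_of_profile (hne : (canOut s τ).Nonempty)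
    (h : ∀ τ', Set.EqOn τ' τ D → ∀ t ∈ canOut s τ', χ ∈ t) : s.Forces D χ := by
  by_contra hχ
  have havail : Avail s τ := canOut_nonempty_iff.1 hne
  obtain ⟨t, ht, hagreed, hχt⟩ := (havail D).exists_mem_succ hχ
  refine hχt (h _ (override_eqOn τ D t) t (mem_canOut_override havail ht hagreed ?_))
  rintro hX rfl
  obtain ⟨u, hu⟩ := hne
  exact hu.1.1 χ (World.mem_negligible_of_not_forces_univ hX hχ) (h τ (Set.eqOn_refl τ _) u hu)

theorem canModel_sat_iff (w : World Agent X) (φ : Formula Agent) (s : World Agent X) :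
    (canModel w).sat φ s ↔ φ ∈ s := by
  induction φ generalizing s with
  | top => exact iff_of_true trivial (Formula.mem_models_top.2 trivial)
  | atom n => exact Iff.rfl
  | neg φ ih => exact (not_congr (ih s)).trans Formula.mem_models_neg.symm
  | and φ ψ ihφ ihψ => exact (and_congr (ihφ s) (ihψ s)).trans Formula.mem_models_and.symm
  | coal C φ ih =>
    refine (Model.sat_coal (M := canModel w)).trans ⟨?_, ?_⟩
    · rintro ⟨τ, hne, h⟩
      exact forces_of_profile hne fun τ' hτ' t ht => (ih t).1 (h τ' hτ' t ht)
    · intro hs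
      obtain ⟨τ, hne, h⟩ := exists_profile_of_forces hs
      exact ⟨τ, hne, fun τ' hτ' t ht => (ih t).2 (h τ' hτ' t ht)⟩

theorem XValid.deriv (h : XValid X φ) : Deriv X φ := by
  by_contra hφ
  obtain ⟨w, hw⟩ := exists_world_notMem hφ
  exact hw ((canModel_sat_iff w φ w).1 (h (canModel w) (canModel_isX w) w))

end Canonical

theorem soundness_and_completeness_general {Agent : Type} (X : Set P3) (φ : Formula Agent) :
    Deriv X φ ↔ XValid X φ :=
  ⟨Deriv.xValid, XValid.deriv⟩

/-- Soundness and completeness of XL: for every X ∈ ES and formula φ,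
⊢_XL φ if and only if ⊨_XL φ. -/
theorem soundness_and_completeness {Agent : Type} [Fintype Agent] (X : Set P3)
    (φ : Formula Agent) : Deriv X φ ↔ XValid X φ :=
  soundness_and_completeness_general X φ

end CL
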